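/- Matching condition: let λ and ρ be real polynomials with nonnegative coefficients satisfying λ(1) = 1, ρ(1) = 1, ρ(0) = 0, and ∫₀¹ λ(u) du > 0, and let ε ∈ (0,1]. If ε·λ(1 − ρ(1 − x)) < x for every x ∈ (0,1], then ε ≤ (∫₀¹ ρ(u) du) / (∫₀¹ λ(u) du). -/

import Mathlib

open Polynomial

/-!
Compare areas under the increasing curve `v = ρ(y)` on `[0, 1]`. By the layer-cake formula `∫₀¹ ρ`
is the integral over `v ∈ (0, 1)` of the length of `{y | v ≤ ρ(y)}`. Writing `v = ρ(y₀)`, this set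
contains `[y₀, 1]`, so its length is at least `1 - y₀`, and density evolution at `x = 1 - y₀` gives
`1 - y₀ ≥ ε λ(1 - v)`. Integrating over `v` yields `∫₀¹ ρ ≥ ε ∫₀¹ λ`.
-/

theorem monotoneOn_eval_of_coeff_nonneg {R : Type*} [Semiring R] [PartialOrder R]
    [IsOrderedRing R] {p : R[X]} (hp : ∀ i, 0 ≤ p.coeff i) :
    MonotoneOn (fun x ↦ p.eval x) (Set.Ici 0) := by
  intro x hx y _ hxy
  simp only [eval_eq_sum_range]
  exact Finset.sum_le_sum fun i _ ↦
    mul_le_mul_of_nonneg_left (pow_le_pow_left₀ hx hxy i) (hp i)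

section

open MeasureTheory Set

variable {f : ℝ → ℝ} {a b : ℝ}

theorem antitone_measureReal_superlevel {α : Type*} [MeasurableSpace α] (μ : Measure α)
    [IsFiniteMeasure μ] (g : α → ℝ) : Antitone fun t ↦ μ.real {x | t ≤ g x} :=
  fun _ _ hst ↦ measureReal_mono fun _ ht ↦ hst.trans ht

theorem intervalIntegral_eq_integral_superlevel {M : ℝ} (hab : a ≤ b) (hM : 0 ≤ M)
    (hf : IntervalIntegrable f volume a b) (hf_mem : ∀ x ∈ Ioc a b, f x ∈ Icc 0 M) :
    ∫ x in a..b, f x = ∫ t in 0..M, (volume.restrict (Ioc a b)).real {x | t ≤ f x} := by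
  rw [intervalIntegral.integral_of_le hab, intervalIntegral.integral_of_le hM]
  exact hf.1.integral_eq_integral_Ioc_meas_le
    (ae_restrict_of_forall_mem measurableSet_Ioc fun x hx ↦ (hf_mem x hx).1)
    (ae_restrict_of_forall_mem measurableSet_Ioc fun x hx ↦ (hf_mem x hx).2)

theorem sub_le_measureReal_superlevel_of_monotoneOn (hf : MonotoneOn f (Icc a b)) {y : ℝ}
    (hy : y ∈ Icc a b) : b - y ≤ (volume.restrict (Ioc a b)).real {x | f y ≤ f x} := by
  have hsub : Ioc y b ⊆ {x | f y ≤ f x} := fun x hx ↦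
    hf hy ⟨hy.1.trans hx.1.le, hx.2⟩ hx.1.le
  calc b - y = volume.real (Ioc y b) := (Real.volume_real_Ioc_of_le hy.2).symm
    _ = (volume.restrict (Ioc a b)).real (Ioc y b) := by
      rw [measureReal_restrict_apply measurableSet_Ioc,
        inter_eq_left.2 (Ioc_subset_Ioc_left hy.1)]
    _ ≤ (volume.restrict (Ioc a b)).real {x | f y ≤ f x} := measureReal_mono hsub

theorem integral_le_integral_of_comp_le_sub {φ : ℝ → ℝ} (hab : a ≤ b)
    (hf_mono : MonotoneOn f (Icc a b)) (hf_cont : ContinuousOn f (Icc a b)) (hfa : f a = 0)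
    (hφ : IntervalIntegrable φ volume 0 (f b)) (hφf : ∀ y ∈ Ioo a b, φ (f y) ≤ b - y) :
    ∫ v in 0..f b, φ v ≤ ∫ y in a..b, f y := by
  have ha : a ∈ Icc a b := left_mem_Icc.2 hab
  have hb : b ∈ Icc a b := right_mem_Icc.2 hab
  have hfb : 0 ≤ f b := hfa ▸ hf_mono ha hb hab
  have hf_mem : ∀ y ∈ Ioc a b, f y ∈ Icc 0 (f b) := fun y hy ↦
    have hy' := Ioc_subset_Icc_self hy
    ⟨hfa ▸ hf_mono ha hy' hy'.1, hf_mono hy' hb hy'.2⟩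
  rw [intervalIntegral_eq_integral_superlevel hab hfb
    (hf_cont.intervalIntegrable_of_Icc hab) hf_mem]
  refine intervalIntegral.integral_mono_on_of_le_Ioo hfb hφ
    (antitone_measureReal_superlevel _ f).intervalIntegrable fun v hv ↦ ?_
  obtain ⟨y, hy, rfl⟩ : v ∈ f '' Ioo a b := intermediate_value_Ioo hab hf_cont (hfa.symm ▸ hv)
  exact (hφf y hy).trans
    (sub_le_measureReal_superlevel_of_monotoneOn hf_mono (Ioo_subset_Icc_self hy))

theorem matching_condition_general {lam rho : ℝ → ℝ} (hlam : IntervalIntegrable lam volume 0 1)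
    (hrho_mono : MonotoneOn rho (Icc 0 1)) (hrho_cont : ContinuousOn rho (Icc 0 1))
    (hrho0 : rho 0 = 0) (hrho1 : rho 1 = 1) (hlamInt : 0 < ∫ u in 0..1, lam u) {ε : ℝ}
    (hsucc : ∀ x ∈ Ioo (0 : ℝ) 1, ε * lam (1 - rho (1 - x)) ≤ x) :
    ε ≤ (∫ u in 0..1, rho u) / ∫ u in 0..1, lam u := by
  rw [le_div_iff₀ hlamInt]
  have hint : IntervalIntegrable (fun v ↦ ε * lam (1 - v)) volume 0 (rho 1) := by
    simpa [hrho1] using (hlam.comp_sub_left 1).symm.const_mul ε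
  have hbound : ∀ y ∈ Ioo (0 : ℝ) 1, ε * lam (1 - rho y) ≤ 1 - y := fun y hy ↦ by
    simpa using hsucc (1 - y) ⟨sub_pos.2 hy.2, sub_lt_self 1 hy.1⟩
  calc ε * ∫ u in 0..1, lam u = ∫ v in 0..rho 1, ε * lam (1 - v) := by simp [hrho1]
    _ ≤ ∫ u in 0..1, rho u :=
      integral_le_integral_of_comp_le_sub zero_le_one hrho_mono hrho_cont hrho0 hint hbound

end

/-- Matching condition: if `ε·λ(1 − ρ(1 − x)) < x` for every `x ∈ (0,1]`
(density evolution succeeds at erasure probability `ε`), then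
`ε ≤ (∫₀¹ ρ)/(∫₀¹ λ)`. -/
theorem matching_condition
    (lam rho : Polynomial ℝ)
    (hlam : ∀ i, 0 ≤ lam.coeff i) (hrho : ∀ i, 0 ≤ rho.coeff i)
    (hlam1 : lam.eval 1 = 1) (hrho1 : rho.eval 1 = 1) (hrho0 : rho.eval 0 = 0)
    (hlamInt : 0 < ∫ u in (0:ℝ)..1, lam.eval u)
    (ε : ℝ) (hε : ε ∈ Set.Ioc (0:ℝ) 1)
    (hsucc : ∀ x ∈ Set.Ioc (0:ℝ) 1, ε * lam.eval (1 - rho.eval (1 - x)) < x) :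
    ε ≤ (∫ u in (0:ℝ)..1, rho.eval u) / (∫ u in (0:ℝ)..1, lam.eval u) := by
  exact matching_condition_general (lam.continuous.intervalIntegrable 0 1)
    ((monotoneOn_eval_of_coeff_nonneg hrho).mono Set.Icc_subset_Ici_self)
    rho.continuous.continuousOn hrho0 hrho1 hlamInt
    fun x hx ↦ (hsucc x (Set.Ioo_subset_Ioc_self hx)).le
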